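/- Let X be a measurable space, Y ⊆ ℝ closed, P a probability measure on X × Y, and L : Y × ℝ → [0,∞) a measurable loss function that is Lipschitz continuous with constant |L|₁. Let X = X_1 ∪ … ∪ X_B be a cover by measurable regions with measurable weights w_b : X → [0,1] satisfying Σ_b w_b = 1 and w_b = 0 off X_b. For each b with P(X_b × Y) > 0 let P_b := P(X_b×Y)^{-1}·P|_{X_b×Y} with marginal P_b^X on X, and let f_b : X → ℝ be measurable with ∫_{X_b} |f_b| dP_b^X < ∞ (take the integral as 0 if P(X_b × Y) = 0). Then the shifted loss of the composed predictor is P-integrable and | R_{L⋆,P}( Σ_{b=1}^B w_b·f_b ) | ≤ |L|₁ · Σ_{b=1}^B P(X_b × Y) · ∫_{X_b} |f_b| dP_b^X < ∞. -/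

import Mathlib

open MeasureTheory

/-!
Lipschitz continuity gives `|L⋆(y, t)| ≤ |L|₁ * ‖t‖`, so the shifted risk of a predictor `g` is at
most `|L|₁ * ∫ ‖g‖ dP^X`. For `g = ∑ b, w_b • f_b` the weights are bounded by one and vanish off
`X_b`, so this integral is at most `∑ b, ∫_{X_b} ‖f_b‖ dP^X`. Since `P` is concentrated on
`X × Y`, the local marginal `P_b^X` is `P^X` conditioned on `X_b`, and undoing its normalization
produces the factor `P(X_b × Y)`.
-/

section Conditioning

open ProbabilityTheory
open scoped ENNReal

variable {Ω E : Type*} [MeasurableSpace Ω] [NormedAddCommGroup E] {μ : Measure Ω} {s : Set Ω}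

lemma measure_smul_cond (hs : μ s ≠ ∞) : μ s • μ[|s] = μ.restrict s := by
  rcases eq_or_ne (μ s) 0 with h0 | h0
  · rw [h0, zero_smul, Measure.restrict_eq_zero.2 h0]
  · rw [ProbabilityTheory.cond, smul_smul, ENNReal.mul_inv_cancel h0 hs, one_smul]

lemma restrict_cond_self : (μ[|s]).restrict s = μ[|s] := by
  rw [ProbabilityTheory.cond, Measure.restrict_smul,
    Measure.restrict_restrict_of_subset subset_rfl]

lemma integrableOn_of_integrableOn_cond {f : Ω → E} (hs : μ s ≠ ∞) (hf : IntegrableOn f s μ[|s]) :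
    IntegrableOn f s μ := by
  rw [IntegrableOn, restrict_cond_self] at hf
  rw [IntegrableOn, ← measure_smul_cond hs]
  exact hf.smul_measure hs

lemma measureReal_smul_setIntegral_cond [NormedSpace ℝ E] (f : Ω → E) (hs : μ s ≠ ∞) :
    μ.real s • ∫ x in s, f x ∂μ[|s] = ∫ x in s, f x ∂μ := by
  rw [restrict_cond_self, ← measure_smul_cond hs, integral_smul_measure, measureReal_def]

variable {X Z : Type*} [MeasurableSpace X] [MeasurableSpace Z]
  {P : Measure (X × Z)} {Y : Set Z}

lemma prod_ae_eq_fst_preimage (hY : ∀ᵐ p ∂P, p.2 ∈ Y) (s : Set X) :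
    s ×ˢ Y =ᵐ[P] Prod.fst ⁻¹' s := by
  filter_upwards [hY] with p hp
  exact propext (and_iff_left hp)

lemma measure_prod_eq_map_fst (hY : ∀ᵐ p ∂P, p.2 ∈ Y) {s : Set X} (hs : MeasurableSet s) :
    P (s ×ˢ Y) = P.map Prod.fst s := by
  rw [measure_congr (prod_ae_eq_fst_preimage hY s), Measure.map_apply measurable_fst hs]

lemma map_fst_cond_prod (hY : ∀ᵐ p ∂P, p.2 ∈ Y) {s : Set X} (hs : MeasurableSet s) :
    (P[|s ×ˢ Y]).map Prod.fst = (P.map Prod.fst)[|s] := by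
  simp only [ProbabilityTheory.cond]
  rw [measure_prod_eq_map_fst hY hs, Measure.map_smul,
    Measure.restrict_congr_set (prod_ae_eq_fst_preimage hY s),
    Measure.restrict_map measurable_fst hs]

end Conditioning

section ComposedPredictor

variable {ι X E : Type*} [Fintype ι] [NormedAddCommGroup E] [NormedSpace ℝ E]

/-- The global predictor `∑ b, w_b • f_b` composed of the local predictors `f_b` with weights
`w_b`. -/
noncomputable def composedPredictor (w : ι → X → ℝ) (f : ι → X → E) (x : X) : E :=
  ∑ b, w b x • f b x

variable [MeasurableSpace X] {μ : Measure X}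

lemma integrable_smul_of_eq_zero_off {S : Set X} {w : X → ℝ} {f : X → E}
    (hwm : AEStronglyMeasurable w μ) (hw : ∀ x, |w x| ≤ 1) (hw0 : ∀ x ∉ S, w x = 0)
    (hf : IntegrableOn f S μ) : Integrable (fun x => w x • f x) μ := by
  have hsupp : Function.support (fun x => w x • f x) ⊆ S := by
    intro x hx
    by_contra hxS
    exact hx (by simp only [hw0 x hxS, zero_smul])
  rw [← integrableOn_iff_integrable_of_support_subset hsupp]
  exact hf.bdd_smul 1 hwm.restrict (ae_of_all _ hw)

lemma integral_norm_smul_le_setIntegral {S : Set X} {w : X → ℝ} {f : X → E}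
    (hw : ∀ x, |w x| ≤ 1) (hw0 : ∀ x ∉ S, w x = 0) (hf : IntegrableOn f S μ) :
    ∫ x, ‖w x • f x‖ ∂μ ≤ ∫ x in S, ‖f x‖ ∂μ := by
  have hoff : ∀ x ∉ S, ‖w x • f x‖ = 0 := fun x hx => by rw [hw0 x hx, zero_smul, norm_zero]
  rw [← setIntegral_eq_integral_of_forall_compl_eq_zero hoff]
  have hle (x : X) : ‖w x • f x‖ ≤ ‖f x‖ := by
    rw [norm_smul]
    exact mul_le_of_le_one_left (norm_nonneg _) (hw x)
  exact integral_mono_of_nonneg (ae_of_all _ fun _ => norm_nonneg _) hf.norm (ae_of_all _ hle)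

variable {S : ι → Set X} {w : ι → X → ℝ} {f : ι → X → E}

lemma integrable_composedPredictor (hwm : ∀ b, AEStronglyMeasurable (w b) μ)
    (hw : ∀ b x, |w b x| ≤ 1) (hw0 : ∀ b, ∀ x ∉ S b, w b x = 0)
    (hf : ∀ b, IntegrableOn (f b) (S b) μ) : Integrable (composedPredictor w f) μ :=
  integrable_finsetSum _ fun b _ => integrable_smul_of_eq_zero_off (hwm b) (hw b) (hw0 b) (hf b)

lemma integral_norm_composedPredictor_le (hwm : ∀ b, AEStronglyMeasurable (w b) μ)
    (hw : ∀ b x, |w b x| ≤ 1) (hw0 : ∀ b, ∀ x ∉ S b, w b x = 0)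
    (hf : ∀ b, IntegrableOn (f b) (S b) μ) :
    ∫ x, ‖composedPredictor w f x‖ ∂μ ≤ ∑ b, ∫ x in S b, ‖f b x‖ ∂μ := by
  have hint (b : ι) : Integrable (fun x => ‖w b x • f b x‖) μ :=
    (integrable_smul_of_eq_zero_off (hwm b) (hw b) (hw0 b) (hf b)).norm
  calc ∫ x, ‖composedPredictor w f x‖ ∂μ
      ≤ ∫ x, ∑ b, ‖w b x • f b x‖ ∂μ :=
        integral_mono (integrable_composedPredictor hwm hw hw0 hf).norm
          (integrable_finsetSum _ fun b _ => hint b) fun _ => norm_sum_le _ _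
    _ = ∑ b, ∫ x, ‖w b x • f b x‖ ∂μ := integral_finsetSum _ fun b _ => hint b
    _ ≤ ∑ b, ∫ x in S b, ‖f b x‖ ∂μ :=
        Finset.sum_le_sum fun b _ => integral_norm_smul_le_setIntegral (hw b) (hw0 b) (hf b)

end ComposedPredictor

section ShiftedLoss

open scoped NNReal

variable {X Z E : Type*} [NormedAddCommGroup E]

/-- The shifted loss `L⋆(y, t) = L(y, t) - L(y, 0)`. For Lipschitz `L` it is integrable along every
integrable predictor, whatever the tails of the labels `y`. -/
def shiftedLoss (L : Z → E → ℝ) (y : Z) (t : E) : ℝ :=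
  L y t - L y 0

lemma abs_shiftedLoss_le {L : Z → E → ℝ} {C : ℝ≥0} {y : Z} (hL : LipschitzWith C (L y)) (t : E) :
    |shiftedLoss L y t| ≤ C * ‖t‖ := by
  simpa only [shiftedLoss, Real.dist_eq, dist_zero_right] using hL.dist_le_mul t 0

variable [MeasurableSpace X] [MeasurableSpace Z]

/-- The shifted risk `R_{L⋆,P}(g)` of a predictor `g`; as a Bochner integral, it takes the value `0`
when the shifted loss of `g` is not `P`-integrable. -/
noncomputable def shiftedRisk (L : Z → E → ℝ) (P : Measure (X × Z)) (g : X → E) : ℝ :=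
  ∫ p, shiftedLoss L p.2 (g p.1) ∂P

variable {L : Z → E → ℝ} {C : ℝ≥0} {P : Measure (X × Z)} {g : X → E}

lemma integrable_shiftedLoss [MeasurableSpace E] [BorelSpace E]
    (hLm : Measurable (Function.uncurry L)) (hL : ∀ᵐ p ∂P, LipschitzWith C (L p.2))
    (hg : Integrable g (P.map Prod.fst)) :
    Integrable (fun p => shiftedLoss L p.2 (g p.1)) P := by
  have hgP : Integrable (fun p : X × Z => g p.1) P := hg.comp_measurable measurable_fst
  have hmeas : AEMeasurable (fun p => shiftedLoss L p.2 (g p.1)) P :=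
    (hLm.comp_aemeasurable (measurable_snd.aemeasurable.prodMk hgP.aemeasurable)).sub
      (hLm.comp (measurable_snd.prodMk measurable_const)).aemeasurable
  exact (hgP.norm.const_mul (C : ℝ)).mono' hmeas.aestronglyMeasurable
    (hL.mono fun p hp => abs_shiftedLoss_le hp (g p.1))

lemma abs_shiftedRisk_le (hL : ∀ᵐ p ∂P, LipschitzWith C (L p.2))
    (hg : Integrable g (P.map Prod.fst)) :
    |shiftedRisk L P g| ≤ C * ∫ x, ‖g x‖ ∂(P.map Prod.fst) := by
  have hgP : Integrable (fun p : X × Z => g p.1) P := hg.comp_measurable measurable_fst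
  calc |shiftedRisk L P g|
    _ ≤ ∫ p, C * ‖g p.1‖ ∂P := by
        rw [shiftedRisk, ← Real.norm_eq_abs]
        exact norm_integral_le_of_norm_le (hgP.norm.const_mul (C : ℝ))
          (hL.mono fun p hp => abs_shiftedLoss_le hp (g p.1))
    _ = C * ∫ x, ‖g x‖ ∂(P.map Prod.fst) := by
        rw [integral_const_mul,
          integral_map measurable_fst.aemeasurable hg.aestronglyMeasurable.norm]

end ShiftedLoss

section LocalizedRisk

open ProbabilityTheory
open scoped NNReal

theorem stmt19_general {ι X Z E : Type*} [Fintype ι] [MeasurableSpace X] [MeasurableSpace Z]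
    [NormedAddCommGroup E] [NormedSpace ℝ E] [MeasurableSpace E] [BorelSpace E]
    {Y : Set Z} {P : Measure (X × Z)} [IsFiniteMeasure P] (hPY : ∀ᵐ p ∂P, p.2 ∈ Y)
    {L : Z → E → ℝ} (hLm : Measurable (Function.uncurry L))
    {C : ℝ≥0} (hL : ∀ y ∈ Y, LipschitzWith C (L y))
    {S : ι → Set X} (hS : ∀ b, MeasurableSet (S b))
    {w : ι → X → ℝ} (hwm : ∀ b, AEStronglyMeasurable (w b) (P.map Prod.fst))
    (hw : ∀ b x, |w b x| ≤ 1) (hw0 : ∀ b, ∀ x ∉ S b, w b x = 0)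
    {f : ι → X → E} (hf : ∀ b, IntegrableOn (f b) (S b) ((P[|S b ×ˢ Y]).map Prod.fst)) :
    Integrable (fun p => shiftedLoss L p.2 (composedPredictor w f p.1)) P ∧
    |shiftedRisk L P (composedPredictor w f)| ≤
      C * ∑ b, P.real (S b ×ˢ Y) * ∫ x in S b, ‖f b x‖ ∂((P[|S b ×ˢ Y]).map Prod.fst) := by
  have hLP : ∀ᵐ p ∂P, LipschitzWith C (L p.2) := hPY.mono fun p hp => hL p.2 hp
  have hfP (b : ι) : IntegrableOn (f b) (S b) (P.map Prod.fst) :=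
    integrableOn_of_integrableOn_cond (measure_ne_top _ _) (map_fst_cond_prod hPY (hS b) ▸ hf b)
  have hlocal (b : ι) :
      P.real (S b ×ˢ Y) * ∫ x in S b, ‖f b x‖ ∂((P[|S b ×ˢ Y]).map Prod.fst) =
        ∫ x in S b, ‖f b x‖ ∂(P.map Prod.fst) := by
    rw [map_fst_cond_prod hPY (hS b), measureReal_def, measure_prod_eq_map_fst hPY (hS b)]
    exact measureReal_smul_setIntegral_cond _ (measure_ne_top _ _)
  have hg : Integrable (composedPredictor w f) (P.map Prod.fst) :=
    integrable_composedPredictor hwm hw hw0 hfP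
  refine ⟨integrable_shiftedLoss hLm hLP hg, (abs_shiftedRisk_le hLP hg).trans ?_⟩
  simp only [hlocal]
  gcongr
  exact integral_norm_composedPredictor_le hwm hw hw0 hfP

end LocalizedRisk

/-- For a Lipschitz continuous loss `L` (constant `C = |L|₁`), a cover
`X = X_1 ∪ … ∪ X_B` with measurable weights `w_b`, local distributions `P_b` (normalized
restrictions of `P`, the null measure when `P(X_b × Y) = 0`) with marginals `P_b^X`, and
measurable `f_b` with `∫_{X_b} |f_b| dP_b^X < ∞`, the shifted loss of the composed predictor
`Σ_b w_b·f_b` is `P`-integrable and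
`|R_{L⋆,P}(Σ_b w_b·f_b)| ≤ |L|₁·Σ_b P(X_b × Y)·∫_{X_b}|f_b| dP_b^X < ∞`. -/
theorem stmt19 {X : Type*} [MeasurableSpace X]
    (Y : Set ℝ) (hY : IsClosed Y) (hYmeas : MeasurableSet Y)
    (P : Measure (X × ℝ)) [IsProbabilityMeasure P]
    (hPY : ∀ᵐ p ∂P, p.2 ∈ Y)
    (L : ℝ → ℝ → ℝ)
    (hLmeas : Measurable (Function.uncurry L))
    (hLnonneg : ∀ y ∈ Y, ∀ t : ℝ, 0 ≤ L y t)
    (C : ℝ) (hC : 0 ≤ C)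
    (hLip : ∀ y ∈ Y, ∀ s t : ℝ, |L y t - L y s| ≤ C * |t - s|)
    (B : ℕ) (Xb : Fin B → Set X) (hXbmeas : ∀ b, MeasurableSet (Xb b))
    (hcover : (⋃ b, Xb b) = Set.univ)
    (w : Fin B → X → ℝ) (hwmeas : ∀ b, Measurable (w b))
    (hw01 : ∀ b x, w b x ∈ Set.Icc (0 : ℝ) 1)
    (hwsum : ∀ x, ∑ b, w b x = 1)
    (hwzero : ∀ b x, x ∉ Xb b → w b x = 0)
    (Pb : Fin B → Measure (X × ℝ))
    (hPb : ∀ b, Pb b = (P ((Xb b) ×ˢ Y))⁻¹ • P.restrict ((Xb b) ×ˢ Y))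
    (f : Fin B → X → ℝ) (hf : ∀ b, Measurable (f b))
    (hfint : ∀ b, IntegrableOn (f b) (Xb b) ((Pb b).map Prod.fst)) :
    Integrable (fun p : X × ℝ => L p.2 (∑ b, w b p.1 * f b p.1) - L p.2 0) P ∧
    |∫ p : X × ℝ, (L p.2 (∑ b, w b p.1 * f b p.1) - L p.2 0) ∂P| ≤
      C * ∑ b, (P ((Xb b) ×ˢ Y)).toReal *
        ∫ x in Xb b, |f b x| ∂((Pb b).map Prod.fst) := by
  obtain rfl : Pb = fun b => ProbabilityTheory.cond P (Xb b ×ˢ Y) := funext hPb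
  have hL (y : ℝ) (hy : y ∈ Y) : LipschitzWith ⟨C, hC⟩ (L y) :=
    LipschitzWith.of_dist_le_mul fun s t => hLip y hy t s
  have hw (b : Fin B) (x : X) : |w b x| ≤ 1 :=
    (abs_of_nonneg (hw01 b x).1).trans_le (hw01 b x).2
  exact stmt19_general hPY hLmeas hL hXbmeas (fun b => (hwmeas b).aestronglyMeasurable) hw hwzero
    hfint
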